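/- arXiv:1610.03624 — 3 statements merged into one kernel-verified Lean document; each statement's English description precedes it below -/
import Mathlib

section
/- For all real β > 0, m > 0 and x ∈ ℝ, the absolutely convergent integral ∫_ℝ exp(i·p·x)·exp(-β·√(p² + m²)) dp equals 2·β·m·K₁(m·√(β² + x²)) / √(β² + x²). -/
open MeasureTheory Real Set Complex

/-- The modified Bessel function of the second kind (MacDonald function),
`K_ν(z) = ∫₀^∞ exp(-z cosh t) cosh(ν t) dt`. -/
noncomputable def besselK (ν z : ℝ) : ℝ :=
  ∫ t in Set.Ioi (0 : ℝ), Real.exp (-z * Real.cosh t) * Real.cosh (ν * t)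

/-!
Substituting `p = m sinh u` turns the exponent `i p x - β √(p² + m²)` into
`-(m β cosh u - i m x sinh u) = -z cosh (u + iφ)`, where `z e^{iφ}` is the polar form of
`m (β - i x)`; here `|φ| < π / 2` because `β > 0`. On the strip `|Im w| ≤ |φ|` the entire function
`exp (-z cosh w + ν w)` decays doubly exponentially, so Cauchy's theorem moves the line of
integration from `Im w = φ` to the real axis, where the integral is `2 K_ν(z)`. Adding the cases
`ν = 1` and `ν = -1` produces the factor `2 cos φ = 2 β / √(β² + x²)`.
-/

section ContourShift

open Filter Topology

variable {E : Type*} [NormedAddCommGroup E]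

theorem integrable_add_mul_I_of_norm_le {f : ℂ → E} {g : ℝ → ℝ} {y : ℝ}
    (hf : ContinuousOn f (univ ×ℂ {y})) (hg : Integrable g)
    (hfg : ∀ x : ℝ, ‖f (x + y * I)‖ ≤ g x) : Integrable fun x : ℝ => f (x + y * I) := by
  have hcont : Continuous fun x : ℝ => f (x + y * I) :=
    hf.comp_continuous (by fun_prop) fun x => by simp [mem_reProdIm]
  exact hg.mono' hcont.aestronglyMeasurable (.of_forall hfg)

variable [NormedSpace ℂ E]

theorem tendsto_intervalIntegral_add_mul_I_of_norm_le {f : ℂ → E} {g : ℝ → ℝ} {a b : ℝ}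
    {l : Filter ℝ} (hg : Tendsto g l (𝓝 0)) (hfg : ∀ x : ℝ, ∀ y ∈ uIcc a b, ‖f (x + y * I)‖ ≤ g x) :
    Tendsto (fun x : ℝ => ∫ y in a..b, f (x + y * I)) l (𝓝 0) := by
  refine squeeze_zero_norm (fun x => ?_) (by simpa using hg.mul_const |b - a|)
  exact intervalIntegral.norm_integral_le_of_norm_le_const fun y hy =>
    hfg x y (uIoc_subset_uIcc hy)

theorem integral_add_mul_I_eq_of_norm_le {f : ℂ → E} {g : ℝ → ℝ} {a b : ℝ}
    (hf : DifferentiableOn ℂ f (univ ×ℂ uIcc a b)) (hg : Integrable g)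
    (hg₀ : Tendsto g (cocompact ℝ) (𝓝 0)) (hfg : ∀ x : ℝ, ∀ y ∈ uIcc a b, ‖f (x + y * I)‖ ≤ g x) :
    ∫ x : ℝ, f (x + a * I) = ∫ x : ℝ, f (x + b * I) := by
  have horizontal : ∀ y ∈ uIcc a b, Tendsto (fun T : ℝ => ∫ x in -T..T, f (x + y * I)) atTop
      (𝓝 (∫ x : ℝ, f (x + y * I))) := fun y hy =>
    intervalIntegral_tendsto_integral
      (integrable_add_mul_I_of_norm_le
        (hf.continuousOn.mono fun w ⟨hre, him⟩ => ⟨hre, singleton_subset_iff.2 hy him⟩)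
        hg fun x => hfg x y hy)
      tendsto_neg_atTop_atBot tendsto_id
  have right : Tendsto (fun T : ℝ => ∫ y in a..b, f (T + y * I)) atTop (𝓝 0) :=
    tendsto_intervalIntegral_add_mul_I_of_norm_le (hg₀.mono_left atTop_le_cocompact) hfg
  have left : Tendsto (fun T : ℝ => ∫ y in a..b, f ((-T : ℝ) + y * I)) atTop (𝓝 0) :=
    (tendsto_intervalIntegral_add_mul_I_of_norm_le (hg₀.mono_left atBot_le_cocompact) hfg).comp
      tendsto_neg_atTop_atBot
  have cauchy : ∀ T : ℝ, (∫ x in -T..T, f (x + a * I)) - (∫ x in -T..T, f (x + b * I)) +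
      I • (∫ y in a..b, f (T + y * I)) - I • (∫ y in a..b, f ((-T : ℝ) + y * I)) = 0 := fun T => by
    simpa using integral_boundary_rect_eq_zero_of_differentiableOn f (-T + a * I) (T + b * I)
      (hf.mono fun w hw => ⟨mem_univ _, by simpa using hw.2⟩)
  have limit := (((horizontal a left_mem_uIcc).sub (horizontal b right_mem_uIcc)).add
    (right.const_smul I)).sub (left.const_smul I)
  simp only [cauchy, smul_zero, add_zero, sub_zero] at limit
  exact sub_eq_zero.1 (tendsto_nhds_unique limit tendsto_const_nhds)

end ContourShift

section ChangeOfVariables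

variable {F : Type*} [NormedAddCommGroup F] [NormedSpace ℝ F] {φ φ' : ℝ → ℝ}

theorem integrable_iff_integrable_abs_deriv_smul_of_bijective
    (hφ' : ∀ x, HasDerivAt φ (φ' x) x) (hφ : φ.Bijective) (g : ℝ → F) :
    Integrable g ↔ Integrable fun x => |φ' x| • g (φ x) := by
  simpa [hφ.surjective.range_eq] using integrableOn_image_iff_integrableOn_abs_deriv_smul
    MeasurableSet.univ (fun x _ => (hφ' x).hasDerivWithinAt) hφ.injective.injOn g

theorem integral_eq_integral_abs_deriv_smul_of_bijective
    (hφ' : ∀ x, HasDerivAt φ (φ' x) x) (hφ : φ.Bijective) (g : ℝ → F) :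
    ∫ x, g x = ∫ x, |φ' x| • g (φ x) := by
  simpa [hφ.surjective.range_eq] using integral_image_eq_integral_abs_deriv_smul
    MeasurableSet.univ (fun x _ => (hφ' x).hasDerivWithinAt) hφ.injective.injOn g

end ChangeOfVariables

section ExpNegCosh

open Filter Topology

theorem sq_div_two_le_cosh (u : ℝ) : u ^ 2 / 2 ≤ Real.cosh u := by
  have half_angle : Real.cosh u = 1 + 2 * Real.sinh (u / 2) ^ 2 := by
    rw [← mul_div_cancel₀ u two_ne_zero, Real.cosh_two_mul, Real.cosh_sq']
    ring_nf
  have sq_le : (u / 2) ^ 2 ≤ Real.sinh (u / 2) ^ 2 := by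
    rw [sq_le_sq, Real.abs_sinh]
    exact Real.self_le_sinh_iff.2 (abs_nonneg _)
  linarith

theorem exp_neg_mul_cosh_add_mul_le {a : ℝ} (ha : 0 ≤ a) (ν u : ℝ) :
    Real.exp (-a * Real.cosh u + ν * u) ≤ Real.exp (-(a / 2) * u ^ 2 + ν * u) := by
  have := mul_le_mul_of_nonneg_left (sq_div_two_le_cosh u) ha
  refine Real.exp_le_exp.2 ?_
  linarith

theorem integrable_exp_neg_mul_cosh_add_mul {a : ℝ} (ha : 0 < a) (ν : ℝ) :
    Integrable fun u : ℝ => Real.exp (-a * Real.cosh u + ν * u) := by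
  have gaussian : Integrable fun u : ℝ => Real.exp (-(a / 2) * u ^ 2 + ν * u) := by
    have := (integrable_cexp_quadratic (b := (a / 2 : ℝ)) (by simpa using ha) ν 0).norm
    simpa [Complex.norm_exp, ← Complex.ofReal_pow] using this
  exact gaussian.mono' (by fun_prop) (.of_forall fun u => by
    simpa using exp_neg_mul_cosh_add_mul_le ha.le ν u)

theorem tendsto_exp_neg_mul_cosh_add_mul_cocompact {a : ℝ} (ha : 0 < a) (ν : ℝ) :
    Tendsto (fun u : ℝ => Real.exp (-a * Real.cosh u + ν * u)) (cocompact ℝ) (𝓝 0) := by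
  have gaussian :
      Tendsto (fun u : ℝ => Real.exp (-(a / 2) * u ^ 2 + ν * u)) (cocompact ℝ) (𝓝 0) := by
    have := (cexp_neg_quadratic_isLittleO_abs_rpow_cocompact (a := (-(a / 2) : ℝ))
      (by simpa using ha) ν 0).norm_left
    simpa [Complex.norm_exp, ← Complex.ofReal_pow] using this
  exact squeeze_zero (fun u => (Real.exp_pos _).le)
    (fun u => exp_neg_mul_cosh_add_mul_le ha.le ν u) gaussian

end ExpNegCosh

section BesselK

theorem besselK_neg (ν z : ℝ) : besselK (-ν) z = besselK ν z := by
  simp only [besselK, neg_mul, Real.cosh_neg]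

theorem exp_mul_cosh_eq (c t : ℝ) :
    Real.exp c * Real.cosh t = (Real.exp (c + t) + Real.exp (c - t)) / 2 := by
  rw [Real.cosh_eq, sub_eq_add_neg, Real.exp_add, Real.exp_add]
  ring

theorem integral_exp_neg_mul_cosh_add_mul {z : ℝ} (hz : 0 < z) (ν : ℝ) :
    ∫ u : ℝ, Real.exp (-z * Real.cosh u + ν * u) = 2 * besselK ν z := by
  have reflect : ∫ u : ℝ, Real.exp (-z * Real.cosh u - ν * u) =
      ∫ u : ℝ, Real.exp (-z * Real.cosh u + ν * u) := by
    simpa [sub_eq_add_neg] using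
      integral_neg_eq_self (fun u : ℝ => Real.exp (-z * Real.cosh u + ν * u)) volume
  have integrable_reflect : Integrable fun u : ℝ => Real.exp (-z * Real.cosh u - ν * u) := by
    simpa [sub_eq_add_neg] using integrable_exp_neg_mul_cosh_add_mul hz (-ν)
  calc ∫ u : ℝ, Real.exp (-z * Real.cosh u + ν * u)
      = ∫ u : ℝ, Real.exp (-z * Real.cosh u) * Real.cosh (ν * u) := by
        simp only [exp_mul_cosh_eq]
        rw [integral_div, integral_add (integrable_exp_neg_mul_cosh_add_mul hz ν)
          integrable_reflect, reflect, add_self_div_two]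
    _ = ∫ u : ℝ, Real.exp (-z * Real.cosh |u|) * Real.cosh (ν * |u|) := by
        congr with u
        rw [Real.cosh_abs, ← Real.cosh_abs (ν * |u|), abs_mul, abs_abs, ← abs_mul, Real.cosh_abs]
    _ = 2 * besselK ν z :=
        integral_comp_abs (f := fun u => Real.exp (-z * Real.cosh u) * Real.cosh (ν * u))

theorem norm_cexp_neg_mul_cosh_add (z ν u y : ℝ) :
    ‖Complex.exp (-z * Complex.cosh (u + y * I) + ν * (u + y * I))‖ =
      Real.exp (-(z * Real.cos y) * Real.cosh u + ν * u) := by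
  have cosh_eq : Complex.cosh (u + y * I) =
      (Real.cosh u * Real.cos y : ℝ) + (Real.sinh u * Real.sin y : ℝ) * I := by
    rw [Complex.cosh_add, Complex.cosh_mul_I, Complex.sinh_mul_I]
    push_cast
    ring
  rw [Complex.norm_exp, cosh_eq, ← Complex.ofReal_neg]
  simp only [Complex.add_re, Complex.re_ofReal_mul, Complex.ofReal_re, Complex.I_re, mul_zero,
    add_zero]
  ring_nf

variable {z φ : ℝ}

theorem integrable_cexp_neg_mul_cosh_add (hz : 0 < z) (hφ : |φ| < π / 2) (ν : ℝ) :
    Integrable fun u : ℝ => Complex.exp (-z * Complex.cosh (u + φ * I) + ν * (u + φ * I)) := by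
  have hcos : 0 < z * Real.cos φ := mul_pos hz (Real.cos_pos_of_mem_Ioo (abs_lt.1 hφ))
  exact (integrable_exp_neg_mul_cosh_add_mul hcos ν).mono' (by fun_prop)
    (.of_forall fun u => (norm_cexp_neg_mul_cosh_add z ν u φ).le)

theorem integral_cexp_neg_mul_cosh_add (hz : 0 < z) (hφ : |φ| < π / 2) (ν : ℝ) :
    ∫ u : ℝ, Complex.exp (-z * Complex.cosh (u + φ * I) + ν * (u + φ * I)) =
      2 * besselK ν z := by
  have hcos : 0 < z * Real.cos φ := mul_pos hz (Real.cos_pos_of_mem_Ioo (abs_lt.1 hφ))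
  have cos_le : ∀ y ∈ uIcc 0 φ, Real.cos φ ≤ Real.cos y := fun y hy => by
    rw [← Real.cos_abs φ, ← Real.cos_abs y]
    exact Real.cos_le_cos_of_nonneg_of_le_pi (abs_nonneg y) (by linarith [Real.pi_pos])
      (by simpa using abs_sub_left_of_mem_uIcc hy)
  have shift := integral_add_mul_I_eq_of_norm_le (a := 0) (b := φ)
    (f := fun w => Complex.exp (-z * Complex.cosh w + ν * w)) (by fun_prop)
    (integrable_exp_neg_mul_cosh_add_mul hcos ν)
    (tendsto_exp_neg_mul_cosh_add_mul_cocompact hcos ν) fun u y hy => by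
      rw [norm_cexp_neg_mul_cosh_add]
      gcongr
      exact cos_le y hy
  rw [← shift, ← Complex.ofReal_ofNat, ← Complex.ofReal_mul,
    ← integral_exp_neg_mul_cosh_add_mul hz, ← integral_complex_ofReal]
  simp

theorem cexp_mul_cosh_eq_add (c : ℂ) (ν u φ : ℝ) :
    Complex.exp c * Real.cosh (ν * u) =
      (Complex.exp (-(ν * φ * I)) * Complex.exp (c + ν * (u + φ * I)) +
        Complex.exp (ν * φ * I) * Complex.exp (c + (-ν : ℝ) * (u + φ * I))) / 2 := by
  rw [← Complex.exp_add, ← Complex.exp_add, Complex.ofReal_cosh, Complex.cosh, mul_div_assoc',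
    mul_add, ← Complex.exp_add, ← Complex.exp_add]
  push_cast
  ring_nf

theorem integrable_cexp_neg_mul_cosh_mul_cosh (hz : 0 < z) (hφ : |φ| < π / 2) (ν : ℝ) :
    Integrable fun u : ℝ =>
      Complex.exp (-z * Complex.cosh (u + φ * I)) * Real.cosh (ν * u) := by
  simp only [cexp_mul_cosh_eq_add _ ν _ φ]
  exact (((integrable_cexp_neg_mul_cosh_add hz hφ ν).const_mul _).add
    ((integrable_cexp_neg_mul_cosh_add hz hφ (-ν)).const_mul _)).div_const 2

theorem integral_cexp_neg_mul_cosh_mul_cosh (hz : 0 < z) (hφ : |φ| < π / 2) (ν : ℝ) :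
    ∫ u : ℝ, Complex.exp (-z * Complex.cosh (u + φ * I)) * Real.cosh (ν * u) =
      2 * Real.cos (ν * φ) * besselK ν z := by
  simp only [cexp_mul_cosh_eq_add _ ν _ φ]
  rw [integral_div, integral_add ((integrable_cexp_neg_mul_cosh_add hz hφ ν).const_mul _)
    ((integrable_cexp_neg_mul_cosh_add hz hφ (-ν)).const_mul _), integral_const_mul,
    integral_const_mul, integral_cexp_neg_mul_cosh_add hz hφ, integral_cexp_neg_mul_cosh_add hz hφ,
    besselK_neg, Complex.ofReal_cos, Complex.cos]
  push_cast
  ring_nf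

theorem norm_mul_cosh_add_arg_mul_I (w u : ℂ) :
    ‖w‖ * Complex.cosh (u + w.arg * I) = w.re * Complex.cosh u + w.im * Complex.sinh u * I := by
  rw [Complex.cosh_add, Complex.cosh_mul_I, Complex.sinh_mul_I, ← Complex.norm_mul_cos_arg,
    ← Complex.norm_mul_sin_arg]
  push_cast
  ring

theorem integrable_cexp_neg_re_mul_cosh_add_im_mul_sinh {w : ℂ} (hw : 0 < w.re) (ν : ℝ) :
    Integrable fun u : ℝ =>
      Complex.exp (-(w.re * Complex.cosh u + w.im * Complex.sinh u * I)) * Real.cosh (ν * u) := by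
  simp only [← norm_mul_cosh_add_arg_mul_I, ← neg_mul]
  exact integrable_cexp_neg_mul_cosh_mul_cosh (hw.trans_le (Complex.re_le_norm w))
    (Complex.abs_arg_lt_pi_div_two_iff.2 (.inl hw)) ν

theorem integral_cexp_neg_re_mul_cosh_add_im_mul_sinh {w : ℂ} (hw : 0 < w.re) (ν : ℝ) :
    ∫ u : ℝ,
      Complex.exp (-(w.re * Complex.cosh u + w.im * Complex.sinh u * I)) * Real.cosh (ν * u) =
      2 * Real.cos (ν * w.arg) * besselK ν ‖w‖ := by
  simp only [← norm_mul_cosh_add_arg_mul_I, ← neg_mul]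
  exact integral_cexp_neg_mul_cosh_mul_cosh (hw.trans_le (Complex.re_le_norm w))
    (Complex.abs_arg_lt_pi_div_two_iff.2 (.inl hw)) ν

end BesselK

section SinhSubstitution

variable {m : ℝ}

theorem hasDerivAt_const_mul_sinh (m u : ℝ) :
    HasDerivAt (fun u => m * Real.sinh u) (m * Real.cosh u) u :=
  (Real.hasDerivAt_sinh u).const_mul m

theorem bijective_const_mul_sinh (hm : m ≠ 0) : Function.Bijective fun u => m * Real.sinh u :=
  (mulLeft_bijective₀ m hm).comp Real.sinh_bijective

theorem sqrt_mul_sinh_sq_add_sq (hm : 0 ≤ m) (u : ℝ) :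
    √((m * Real.sinh u) ^ 2 + m ^ 2) = m * Real.cosh u := by
  have : (m * Real.sinh u) ^ 2 + m ^ 2 = (m * Real.cosh u) ^ 2 := by
    linear_combination -m ^ 2 * Real.cosh_sq u
  rw [this, Real.sqrt_sq (by positivity)]

theorem abs_deriv_smul_cexp_mul_exp_sqrt_mul_sinh (hm : 0 ≤ m) (β x u : ℝ) :
    |m * Real.cosh u| • (Complex.exp (I * (m * Real.sinh u : ℝ) * x) *
        Real.exp (-β * √((m * Real.sinh u) ^ 2 + m ^ 2))) =
      m * (Complex.exp (-((m * β : ℝ) * Complex.cosh u + (-(m * x) : ℝ) * Complex.sinh u * I)) *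
        Real.cosh u) := by
  rw [sqrt_mul_sinh_sq_add_sq hm, abs_of_nonneg (by positivity), Complex.real_smul,
    Complex.ofReal_exp, ← Complex.exp_add]
  push_cast
  ring_nf

end SinhSubstitution

/-- The regularized (1+1)-dimensional Fourier integral of the square-root Green function:
for `β > 0`, `m > 0`, `x ∈ ℝ`,
`∫_ℝ exp(i p x) exp(-β √(p² + m²)) dp = 2 β m K₁(m √(β² + x²)) / √(β² + x²)`. -/
theorem fourier_integral_exp_sqrt_one_dim (β m x : ℝ) (hβ : 0 < β) (hm : 0 < m) :
    Integrable (fun p : ℝ =>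
        Complex.exp (Complex.I * p * x) * Real.exp (-β * Real.sqrt (p ^ 2 + m ^ 2))) volume ∧
    ∫ p : ℝ, Complex.exp (Complex.I * p * x) * Real.exp (-β * Real.sqrt (p ^ 2 + m ^ 2))
      = ((2 * β * m * besselK 1 (m * Real.sqrt (β ^ 2 + x ^ 2))
          / Real.sqrt (β ^ 2 + x ^ 2) : ℝ) : ℂ) := by
  set w : ℂ := ⟨m * β, -(m * x)⟩
  have hw : 0 < w.re := mul_pos hm hβ
  have norm_w : ‖w‖ = m * √(β ^ 2 + x ^ 2) := by
    have : w.re ^ 2 + w.im ^ 2 = m ^ 2 * (β ^ 2 + x ^ 2) := by ring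
    rw [Complex.norm_eq_sqrt_sq_add_sq, this, Real.sqrt_mul (sq_nonneg m), Real.sqrt_sq hm.le]
  have cos_arg_w : Real.cos w.arg = β / √(β ^ 2 + x ^ 2) := by
    rw [Complex.cos_arg (fun h => by simp [h] at hw), norm_w, mul_div_mul_left _ _ hm.ne']
  have hderiv := hasDerivAt_const_mul_sinh m
  have hbij := bijective_const_mul_sinh hm.ne'
  constructor
  · rw [integrable_iff_integrable_abs_deriv_smul_of_bijective hderiv hbij]
    simpa only [abs_deriv_smul_cexp_mul_exp_sqrt_mul_sinh hm.le, one_mul] using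
      (integrable_cexp_neg_re_mul_cosh_add_im_mul_sinh hw 1).const_mul (m : ℂ)
  · have bessel_integral := integral_cexp_neg_re_mul_cosh_add_im_mul_sinh hw 1
    simp only [one_mul, cos_arg_w, norm_w] at bessel_integral
    rw [integral_eq_integral_abs_deriv_smul_of_bijective hderiv hbij]
    simp only [abs_deriv_smul_cexp_mul_exp_sqrt_mul_sinh hm.le]
    rw [integral_const_mul, bessel_integral]
    push_cast
    ring
end

section
/- Let N ≥ 3 be an odd integer and let β > 0, m > 0 be real. Then for every r > 0, the (N-3)-rd iterated derivative at r of the function r ↦ β·r·m²·K₂(m·√(β² + r²)) / (β² + r²) equals (-1)^((N-3)/2) · ∫₀^∞ p^(N-2)·sin(p·r)·exp(-β·√(p² + m²)) dp, the integral being absolutely convergent. -/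
open MeasureTheory Real Set

/-!
Put `β = R cos φ` and `r = R sin φ`. The substitution `p = m sinh t` turns the radial integral
`∫ p sin(pr) exp(-β√(p² + m²)) dp` into the imaginary part of
`∫ exp(2t - mR cosh(t - iφ)) dt` over the real line, up to a constant factor. Since
`|φ| < π/2`, the integrand decays in the strip between `Im t = 0` and `Im t = φ`, and moving the
contour by `iφ` gives `2 exp(2iφ) K₂(mR)`, whose imaginary part is `2 sin(2φ) K₂(mR)` with
`sin 2φ = 2βr / R²`. Every further derivative in `r` may be taken under the integral sign,
because `exp(-β√(p² + m²))` dominates all powers of `p`.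
-/

open Filter Topology
open scoped Interval

section IntegralLemmas

variable {E : Type*} [NormedAddCommGroup E]

theorem integral_add_mul_I_eq_of_norm_le_s6 [NormedSpace ℂ E] {f : ℂ → E} {a b : ℝ} {B : ℝ → ℝ}
    (hf : DifferentiableOn ℂ f (Complex.im ⁻¹' [[a, b]])) (hB : Integrable B)
    (hB_zero : Tendsto B (cocompact ℝ) (𝓝 0))
    (hfB : ∀ z : ℂ, z.im ∈ [[a, b]] → ‖f z‖ ≤ B z.re) :
    ∫ t : ℝ, f (t + a * Complex.I) = ∫ t : ℝ, f (t + b * Complex.I) := by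
  have horizontal {y : ℝ} (hy : y ∈ [[a, b]]) :
      Tendsto (fun T : ℝ ↦ ∫ t in -T..T, f (t + y * Complex.I)) atTop
        (𝓝 (∫ t : ℝ, f (t + y * Complex.I))) := by
    have hcont : Continuous fun t : ℝ ↦ f (t + y * Complex.I) :=
      hf.continuousOn.comp_continuous (by fun_prop) fun t ↦ by simpa using hy
    have hint : Integrable fun t : ℝ ↦ f (t + y * Complex.I) :=
      hB.mono' hcont.aestronglyMeasurable <| .of_forall fun t ↦ by
        simpa using hfB (t + y * Complex.I) (by simpa using hy)
    exact intervalIntegral_tendsto_integral hint tendsto_neg_atTop_atBot tendsto_id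
  have vertical {l : Filter ℝ} {u : ℝ → ℝ} (hu : Tendsto u l (cocompact ℝ)) :
      Tendsto (fun T ↦ ∫ y in a..b, f (u T + y * Complex.I)) l (𝓝 0) := by
    refine squeeze_zero_norm (fun T ↦ ?_)
      (by simpa using (hB_zero.comp hu).mul_const |b - a|)
    exact intervalIntegral.norm_integral_le_of_norm_le_const fun y hy ↦ by
      simpa using hfB (u T + y * Complex.I) (by simpa using uIoc_subset_uIcc hy)
  have cauchy (T : ℝ) :
      (∫ t in -T..T, f (t + a * Complex.I)) - (∫ t in -T..T, f (t + b * Complex.I))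
        + Complex.I • (∫ y in a..b, f (T + y * Complex.I))
        - Complex.I • (∫ y in a..b, f ((-T : ℝ) + y * Complex.I)) = 0 := by
    simpa using Complex.integral_boundary_rect_eq_zero_of_differentiableOn f
      ⟨-T, a⟩ ⟨T, b⟩ (hf.mono fun z hz ↦ hz.2)
  have limit := (((horizontal left_mem_uIcc).sub (horizontal right_mem_uIcc)).add
    ((vertical (tendsto_id.mono_right atTop_le_cocompact)).const_smul Complex.I)).sub
    ((vertical (tendsto_neg_atTop_atBot.mono_right atBot_le_cocompact)).const_smul Complex.I)
  simp only [id, cauchy, smul_zero, add_zero, sub_zero] at limit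
  exact sub_eq_zero.mp (tendsto_nhds_unique limit tendsto_const_nhds)

variable [NormedSpace ℝ E]

theorem integral_eq_setIntegral_Ioi_add_comp_neg {f : ℝ → E} (hf : Integrable f) :
    ∫ t, f t = ∫ t in Ioi (0 : ℝ), (f t + f (-t)) := by
  rw [integral_add hf.integrableOn hf.comp_neg.integrableOn, integral_comp_neg_Ioi, neg_zero,
    add_comm, intervalIntegral.integral_Iic_add_Ioi hf.integrableOn hf.integrableOn]

theorem setIntegral_Ioi_eq_setIntegral_comp_mul_sinh {m : ℝ} (hm : 0 < m) (g : ℝ → E) :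
    ∫ p in Ioi (0 : ℝ), g p = ∫ t in Ioi (0 : ℝ), (m * cosh t) • g (m * sinh t) := by
  have himage : (fun t ↦ m * sinh t) '' Ioi 0 = Ioi 0 := by
    rw [← image_image (m * ·) sinh, show sinh '' Ioi 0 = Ioi 0 by
      simpa using sinhOrderIso.image_Ioi 0, image_const_mul_Ioi_zero hm]
  conv_lhs => rw [← himage]
  exact integral_image_eq_integral_deriv_smul_of_monotoneOn measurableSet_Ioi
    (fun t _ ↦ ((hasDerivAt_sinh t).const_mul m).hasDerivWithinAt)
    ((sinh_strictMono.monotone.const_mul hm.le).monotoneOn _) g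

end IntegralLemmas

section Hyperbolic

theorem one_add_sq_div_two_le_cosh (t : ℝ) : 1 + t ^ 2 / 2 ≤ cosh t := by
  have hsinh : (t / 2) ^ 2 ≤ sinh (t / 2) ^ 2 := by
    rw [sq_le_sq, abs_sinh]
    exact self_le_sinh_iff.mpr (abs_nonneg _)
  have hcosh : cosh t = 1 + 2 * sinh (t / 2) ^ 2 := by
    rw [show cosh t = cosh (2 * (t / 2)) by ring_nf, cosh_two_mul, cosh_sq]
    ring
  linarith

theorem re_cosh_eq_cosh_re_mul_cos_im (z : ℂ) : (Complex.cosh z).re = cosh z.re * cos z.im := by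
  conv_lhs => rw [← Complex.re_add_im z, Complex.cosh_add, Complex.cosh_mul_I, Complex.sinh_mul_I]
  simp [← Complex.ofReal_cosh, ← Complex.ofReal_sinh, ← Complex.ofReal_cos, ← Complex.ofReal_sin]

end Hyperbolic

section Gaussian

variable {b : ℝ} (hb : 0 < b) (ν : ℝ)
include hb

theorem integrable_exp_mul_sub_mul_sq : Integrable fun t : ℝ ↦ exp (ν * t - b * t ^ 2) := by
  refine (integrable_cexp_quadratic (b := b) (by simpa using hb) ν 0).norm.congr
    (.of_forall fun t ↦ ?_)
  simp [Complex.norm_exp, ← Complex.ofReal_pow, sub_eq_neg_add]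

theorem tendsto_exp_mul_sub_mul_sq_cocompact :
    Tendsto (fun t : ℝ ↦ exp (ν * t - b * t ^ 2)) (cocompact ℝ) (𝓝 0) := by
  have hlittleO := cexp_neg_quadratic_isLittleO_abs_rpow_cocompact (a := -b) (by simpa using hb) ν 0
  simp only [rpow_zero, Asymptotics.isLittleO_one_iff] at hlittleO
  refine (tendsto_zero_iff_norm_tendsto_zero.mp hlittleO).congr fun t ↦ ?_
  simp [Complex.norm_exp, ← Complex.ofReal_pow, sub_eq_neg_add]

end Gaussian

/-- The entire function `z ↦ exp (ν z - c cosh z)`, whose integral along the real line is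
`2 K_ν(c)`. -/
noncomputable def besselKIntegrand (ν c : ℝ) (z : ℂ) : ℂ :=
  Complex.exp (ν * z - c * Complex.cosh z)

section BesselK

variable {c φ : ℝ}

theorem differentiable_besselKIntegrand (ν c : ℝ) : Differentiable ℂ (besselKIntegrand ν c) := by
  unfold besselKIntegrand
  fun_prop

theorem besselKIntegrand_ofReal (ν c t : ℝ) :
    besselKIntegrand ν c t = exp (ν * t - c * cosh t) := by
  simp [besselKIntegrand]

theorem norm_besselKIntegrand_le (ν : ℝ) (hc : 0 ≤ c) (hφ : |φ| ≤ π / 2) {z : ℂ}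
    (hz : |z.im| ≤ |φ|) :
    ‖besselKIntegrand ν c z‖ ≤ exp (ν * z.re - c * cos φ / 2 * z.re ^ 2) := by
  have hcosφ : 0 ≤ cos φ := cos_nonneg_of_neg_pi_div_two_le_of_le (abs_le.mp hφ).1 (abs_le.mp hφ).2
  have hcos : cos φ ≤ cos z.im := by
    rw [← cos_abs φ, ← cos_abs z.im]
    exact cos_le_cos_of_nonneg_of_le_pi (abs_nonneg _) (by linarith [pi_pos]) hz
  have hcosh : z.re ^ 2 / 2 ≤ cosh z.re := by linarith [one_add_sq_div_two_le_cosh z.re]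
  have hre : (ν * z - c * Complex.cosh z).re = ν * z.re - c * (cosh z.re * cos z.im) := by
    simp [re_cosh_eq_cosh_re_mul_cos_im]
  rw [besselKIntegrand, Complex.norm_exp, hre]
  refine exp_le_exp.mpr (sub_le_sub_left ?_ _)
  calc c * cos φ / 2 * z.re ^ 2 = c * (z.re ^ 2 / 2 * cos φ) := by ring
    _ ≤ c * (cosh z.re * cos z.im) := by gcongr

theorem integrable_besselKIntegrand_add_mul_I (ν : ℝ) (hc : 0 < c) (hφ : |φ| < π / 2) :
    Integrable fun t : ℝ ↦ besselKIntegrand ν c (t + φ * Complex.I) := by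
  have hcos : 0 < cos φ := cos_pos_of_mem_Ioo (abs_lt.mp hφ)
  have hcont := (differentiable_besselKIntegrand ν c).continuous
  refine (integrable_exp_mul_sub_mul_sq (b := c * cos φ / 2) (by positivity) ν).mono'
    (Continuous.aestronglyMeasurable (by fun_prop)) (.of_forall fun t ↦ ?_)
  simpa using norm_besselKIntegrand_le ν hc.le hφ.le (z := t + φ * Complex.I) (by simp)

theorem integral_besselKIntegrand_ofReal (ν : ℝ) (hc : 0 < c) :
    ∫ t : ℝ, besselKIntegrand ν c t = 2 * besselK ν c := by
  have hint : Integrable fun t : ℝ ↦ exp (ν * t - c * cosh t) := by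
    simpa only [Complex.ofReal_zero, zero_mul, add_zero, besselKIntegrand_ofReal,
      RCLike.re_eq_complex_re, Complex.ofReal_re] using
      (integrable_besselKIntegrand_add_mul_I ν hc (φ := 0) (by simp [pi_pos])).re
  have hreal : ∫ t, exp (ν * t - c * cosh t) = 2 * besselK ν c := by
    rw [integral_eq_setIntegral_Ioi_add_comp_neg hint, besselK, ← integral_const_mul]
    congr 1 with t
    rw [cosh_neg, cosh_eq (ν * t), sub_eq_add_neg, sub_eq_add_neg, exp_add, exp_add]
    ring_nf
  simp_rw [besselKIntegrand_ofReal]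
  rw [integral_complex_ofReal, hreal, Complex.ofReal_mul, Complex.ofReal_ofNat]

theorem integral_besselKIntegrand_add_mul_I (ν : ℝ) (hc : 0 < c) (hφ : |φ| < π / 2) :
    ∫ t : ℝ, besselKIntegrand ν c (t + φ * Complex.I) = 2 * besselK ν c := by
  have hcos : 0 < cos φ := cos_pos_of_mem_Ioo (abs_lt.mp hφ)
  have hb : 0 < c * cos φ / 2 := by positivity
  rw [← integral_besselKIntegrand_ofReal ν hc]
  simpa using (integral_add_mul_I_eq_of_norm_le_s6 (a := 0)
    (differentiable_besselKIntegrand ν c).differentiableOn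
    (integrable_exp_mul_sub_mul_sq hb ν) (tendsto_exp_mul_sub_mul_sq_cocompact hb ν)
    fun z hz ↦ norm_besselKIntegrand_le ν hc.le hφ.le
      (by simpa using abs_sub_left_of_mem_uIcc hz)).symm

theorem im_cexp_mul_besselKIntegrand (ν c φ t : ℝ) :
    (Complex.exp (ν * φ * Complex.I) * besselKIntegrand ν c (t + (-φ : ℝ) * Complex.I)).im =
      exp (ν * t - c * cos φ * cosh t) * sin (c * sin φ * sinh t) := by
  have hexponent : (ν * φ * Complex.I + (ν * (t + (-φ : ℝ) * Complex.I)
      - c * Complex.cosh (t + (-φ : ℝ) * Complex.I)) : ℂ) =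
      (ν * t - c * cos φ * cosh t : ℝ) + (c * sin φ * sinh t : ℝ) * Complex.I := by
    rw [Complex.cosh_add, Complex.cosh_mul_I, Complex.sinh_mul_I]
    push_cast [Complex.cos_neg, Complex.sin_neg]
    ring
  rw [besselKIntegrand, ← Complex.exp_add, hexponent, Complex.exp_add, ← Complex.ofReal_exp,
    Complex.im_ofReal_mul, Complex.exp_ofReal_mul_I_im]

theorem setIntegral_sinh_mul_sin_mul_exp_eq_sin_mul_besselK (ν : ℝ) (hc : 0 < c)
    (hφ : |φ| < π / 2) :
    ∫ t in Ioi (0 : ℝ), sinh (ν * t) * sin (c * sin φ * sinh t) * exp (-(c * cos φ * cosh t)) =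
      sin (ν * φ) * besselK ν c := by
  have hφ' : |-φ| < π / 2 := by rwa [abs_neg]
  have hint := (integrable_besselKIntegrand_add_mul_I ν hc hφ').const_mul
    (Complex.exp (ν * φ * Complex.I))
  have himag : ∫ t : ℝ, exp (ν * t - c * cos φ * cosh t) * sin (c * sin φ * sinh t) =
      2 * (sin (ν * φ) * besselK ν c) := by
    simp_rw [← im_cexp_mul_besselKIntegrand]
    rw [← RCLike.im_eq_complex_im, integral_im hint, integral_const_mul,
      integral_besselKIntegrand_add_mul_I ν hc hφ']
    have hrhs : Complex.exp (ν * φ * Complex.I) * (2 * besselK ν c) =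
        (2 * besselK ν c : ℝ) * Complex.exp ((ν * φ : ℝ) * Complex.I) := by
      push_cast
      ring
    rw [hrhs, RCLike.im_eq_complex_im, Complex.im_ofReal_mul, Complex.exp_ofReal_mul_I_im]
    ring
  rw [integral_eq_setIntegral_Ioi_add_comp_neg (hint.im.congr (.of_forall fun t ↦
    im_cexp_mul_besselKIntegrand ν c φ t))] at himag
  rw [← mul_right_inj' (two_ne_zero' ℝ), ← himag, ← integral_const_mul]
  congr 1 with t
  rw [cosh_neg, sinh_neg, sinh_eq (ν * t), mul_neg (c * sin φ), sin_neg, mul_neg ν,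
    sub_eq_add_neg (ν * t), sub_eq_add_neg (-(ν * t)), exp_add, exp_add]
  ring_nf

end BesselK

section DerivUnderIntegral

variable {μ : Measure ℝ} {w g g' : ℝ → ℝ}

theorem hasDerivAt_integral_mul_comp_mul {C C' : ℝ} (hw : Integrable w μ)
    (hpw : Integrable (fun p ↦ p * w p) μ) (hg : ∀ x, HasDerivAt g (g' x) x)
    (hgC : ∀ x, |g x| ≤ C) (hgC' : ∀ x, |g' x| ≤ C') (s : ℝ) :
    HasDerivAt (fun s ↦ ∫ p, w p * g (p * s) ∂μ) (∫ p, p * w p * g' (p * s) ∂μ) s := by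
  have hg_meas : Measurable g :=
    (continuous_iff_continuousAt.mpr fun x ↦ (hg x).continuousAt).measurable
  have hg'_meas : Measurable g' := by
    rw [← funext fun x ↦ (hg x).deriv]
    exact measurable_deriv g
  have hmeas (s : ℝ) : AEStronglyMeasurable (fun p ↦ w p * g (p * s)) μ :=
    hw.aestronglyMeasurable.mul (hg_meas.comp (measurable_mul_const s)).aestronglyMeasurable
  refine (hasDerivAt_integral_of_dominated_loc_of_deriv_le
    (F' := fun s p ↦ p * w p * g' (p * s)) (bound := fun p ↦ |p * w p| * C') univ_mem
    (.of_forall hmeas) ?_ ?_ ?_ (hpw.abs.mul_const C') ?_).2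
  · exact hw.mul_bdd (hg_meas.comp (measurable_mul_const s)).aestronglyMeasurable
      (.of_forall fun p ↦ hgC (p * s))
  · exact hpw.aestronglyMeasurable.mul
      (hg'_meas.comp (measurable_mul_const s)).aestronglyMeasurable
  · refine .of_forall fun p s _ ↦ ?_
    rw [norm_mul, norm_eq_abs, norm_eq_abs]
    gcongr
    exact hgC' _
  · refine .of_forall fun p s _ ↦ ?_
    exact (((hg (p * s)).comp s (hasDerivAt_const_mul p)).const_mul (w p)).congr_deriv (by ring)

theorem iteratedDeriv_integral_mul_comp_mul {n : ℕ} (hg : ContDiff ℝ n g)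
    (hgC : ∀ k ≤ n, ∃ C, ∀ x, |iteratedDeriv k g x| ≤ C)
    (hw : ∀ k ≤ n, Integrable (fun p ↦ p ^ k * w p) μ) :
    iteratedDeriv n (fun s ↦ ∫ p, w p * g (p * s) ∂μ) =
      fun s ↦ ∫ p, p ^ n * w p * iteratedDeriv n g (p * s) ∂μ := by
  induction n with
  | zero => simp
  | succ n ih =>
    have ih := ih (hg.of_le (by norm_cast; omega)) (fun k hk ↦ hgC k (by omega))
      fun k hk ↦ hw k (by omega)
    obtain ⟨C, hC⟩ := hgC n (by omega)
    obtain ⟨C', hC'⟩ := hgC (n + 1) le_rfl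
    have hderiv (x : ℝ) : HasDerivAt (iteratedDeriv n g) (iteratedDeriv (n + 1) g x) x := by
      rw [iteratedDeriv_succ]
      exact (hg.differentiable_iteratedDeriv n (by norm_cast; omega) x).hasDerivAt
    have hpw : Integrable (fun p ↦ p * (p ^ n * w p)) μ := by
      simpa only [pow_succ', mul_assoc] using hw (n + 1) le_rfl
    rw [iteratedDeriv_succ, ih]
    funext s
    rw [(hasDerivAt_integral_mul_comp_mul (hw n (by omega)) hpw hderiv hC hC' s).deriv]
    simp only [pow_succ', mul_assoc]

end DerivUnderIntegral

section RadialIntegral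

variable {β m : ℝ}

theorem integrableOn_pow_mul_exp_neg_mul_sqrt (hβ : 0 < β) (m : ℝ) (n : ℕ) :
    IntegrableOn (fun p ↦ p ^ n * exp (-β * √(p ^ 2 + m ^ 2))) (Ioi 0) := by
  have hgamma : IntegrableOn (fun p : ℝ ↦ p ^ n * exp (-β * p)) (Ioi 0) := by
    simpa using integrableOn_rpow_mul_exp_neg_mul_rpow (s := n)
      (neg_one_lt_zero.trans_le n.cast_nonneg) one_pos hβ
  refine hgamma.mono' (Continuous.aestronglyMeasurable (by fun_prop))
    ((ae_restrict_iff' measurableSet_Ioi).mpr (.of_forall fun p (hp : 0 < p) ↦ ?_))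
  have hsqrt : p ≤ √(p ^ 2 + m ^ 2) := le_sqrt_of_sq_le (by linarith [sq_nonneg m])
  rw [norm_of_nonneg (by positivity), neg_mul, neg_mul]
  gcongr

theorem integrableOn_pow_mul_sin_mul_exp_neg_mul_sqrt (hβ : 0 < β) (m : ℝ) (n : ℕ) (r : ℝ) :
    IntegrableOn (fun p ↦ p ^ n * sin (p * r) * exp (-β * √(p ^ 2 + m ^ 2))) (Ioi 0) := by
  simp_rw [mul_right_comm _ (sin _)]
  exact (integrableOn_pow_mul_exp_neg_mul_sqrt hβ m n).mul_bdd
    (Continuous.aestronglyMeasurable (by fun_prop)) (.of_forall fun p ↦ abs_sin_le_one (p * r))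

theorem setIntegral_mul_sin_mul_exp_neg_mul_sqrt_eq_besselK (hβ : 0 < β) (hm : 0 < m) (r : ℝ) :
    ∫ p in Ioi (0 : ℝ), p * exp (-β * √(p ^ 2 + m ^ 2)) * sin (p * r) =
      β * r * m ^ 2 * besselK 2 (m * √(β ^ 2 + r ^ 2)) / (β ^ 2 + r ^ 2) := by
  obtain ⟨R, φ, hR, hφ, rfl, rfl⟩ :
      ∃ R φ, 0 < R ∧ |φ| < π / 2 ∧ R * cos φ = β ∧ R * sin φ = r := by
    refine ⟨‖(⟨β, r⟩ : ℂ)‖, Complex.arg ⟨β, r⟩, ?_,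
      Complex.abs_arg_lt_pi_div_two_iff.mpr (.inl hβ), Complex.norm_mul_cos_arg _,
      Complex.norm_mul_sin_arg _⟩
    exact norm_pos_iff.mpr fun h ↦ hβ.ne' (congrArg Complex.re h)
  have hnorm : (R * cos φ) ^ 2 + (R * sin φ) ^ 2 = R ^ 2 := by
    linear_combination R ^ 2 * cos_sq_add_sin_sq φ
  have hintegrand (t : ℝ) :
      (m * cosh t) • (m * sinh t * exp (-(R * cos φ) * √((m * sinh t) ^ 2 + m ^ 2))
        * sin (m * sinh t * (R * sin φ))) =
      m ^ 2 / 2 * (sinh (2 * t) * sin (m * R * sin φ * sinh t)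
        * exp (-(m * R * cos φ * cosh t))) := by
    have hsq : (m * sinh t) ^ 2 + m ^ 2 = (m * cosh t) ^ 2 := by
      linear_combination -m ^ 2 * cosh_sq t
    rw [hsq, sqrt_sq (mul_pos hm (cosh_pos t)).le, sinh_two_mul, smul_eq_mul]
    ring_nf
  rw [hnorm, sqrt_sq hR.le, setIntegral_Ioi_eq_setIntegral_comp_mul_sinh hm]
  simp_rw [hintegrand]
  rw [integral_const_mul,
    setIntegral_sinh_mul_sin_mul_exp_eq_sin_mul_besselK 2 (mul_pos hm hR) hφ, sin_two_mul]
  field_simp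

theorem iteratedDeriv_green_kernel_eq_setIntegral (hβ : 0 < β) (hm : 0 < m) (n : ℕ) (r : ℝ) :
    iteratedDeriv n
        (fun s ↦ β * s * m ^ 2 * besselK 2 (m * √(β ^ 2 + s ^ 2)) / (β ^ 2 + s ^ 2)) r =
      ∫ p in Ioi (0 : ℝ),
        p ^ (n + 1) * iteratedDeriv n sin (p * r) * exp (-β * √(p ^ 2 + m ^ 2)) := by
  simp_rw [← setIntegral_mul_sin_mul_exp_neg_mul_sqrt_eq_besselK hβ hm]
  rw [iteratedDeriv_integral_mul_comp_mul contDiff_sin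
    (fun k _ ↦ ⟨1, abs_iteratedDeriv_sin_le_one k⟩)
    fun k _ ↦ (integrableOn_pow_mul_exp_neg_mul_sqrt hβ m (k + 1)).congr
      (.of_forall fun p ↦ by ring)]
  beta_reduce
  congr 1 with p
  ring

theorem iteratedDeriv_green_kernel_eq_radial_integral_general (N : ℕ) (hN : Odd N) (hN3 : 3 ≤ N)
    (β m : ℝ) (hβ : 0 < β) (hm : 0 < m) (r : ℝ) :
    IntegrableOn (fun p : ℝ ↦ p ^ (N - 2) * sin (p * r) * exp (-β * √(p ^ 2 + m ^ 2))) (Ioi 0) ∧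
    iteratedDeriv (N - 3)
        (fun s ↦ β * s * m ^ 2 * besselK 2 (m * √(β ^ 2 + s ^ 2)) / (β ^ 2 + s ^ 2)) r =
      (-1) ^ ((N - 3) / 2) *
        ∫ p in Ioi (0 : ℝ), p ^ (N - 2) * sin (p * r) * exp (-β * √(p ^ 2 + m ^ 2)) := by
  refine ⟨integrableOn_pow_mul_sin_mul_exp_neg_mul_sqrt hβ m (N - 2) r, ?_⟩
  obtain ⟨k, rfl⟩ : ∃ k, N = 2 * k + 3 := by
    obtain ⟨j, rfl⟩ := hN
    exact ⟨j - 1, by omega⟩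
  rw [show 2 * k + 3 - 2 = 2 * k + 1 by omega, Nat.add_sub_cancel,
    Nat.mul_div_cancel_left k two_pos, iteratedDeriv_green_kernel_eq_setIntegral hβ hm,
    iteratedDeriv_even_sin, ← integral_const_mul]
  congr 1 with p
  simp only [Pi.mul_apply, Pi.pow_apply, Pi.neg_apply, Pi.one_apply]
  ring

end RadialIntegral

/-- Equation (32) of the paper: for odd `N ≥ 3`, `β > 0`, `m > 0` and `r > 0`, the
`(N-3)`-rd derivative of `r ↦ β r m² K₂(m √(β² + r²)) / (β² + r²)` equals
`(-1)^((N-3)/2) ∫₀^∞ p^(N-2) sin(p r) exp(-β √(p² + m²)) dp`. -/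
theorem iteratedDeriv_green_kernel_eq_radial_integral (N : ℕ) (hN : Odd N) (hN3 : 3 ≤ N)
    (β m : ℝ) (hβ : 0 < β) (hm : 0 < m) (r : ℝ) (hr : 0 < r) :
    IntegrableOn (fun p : ℝ =>
        p ^ (N - 2) * Real.sin (p * r) * Real.exp (-β * Real.sqrt (p ^ 2 + m ^ 2)))
      (Set.Ioi 0) volume ∧
    iteratedDeriv (N - 3)
        (fun s : ℝ => β * s * m ^ 2 * besselK 2 (m * Real.sqrt (β ^ 2 + s ^ 2)) / (β ^ 2 + s ^ 2))
        r
      = (-1) ^ ((N - 3) / 2) * ∫ p in Set.Ioi (0 : ℝ),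
          p ^ (N - 2) * Real.sin (p * r) * Real.exp (-β * Real.sqrt (p ^ 2 + m ^ 2)) :=
  iteratedDeriv_green_kernel_eq_radial_integral_general N hN hN3 β m hβ hm r
end

section
/- Let m > 0, t > 0 and x ∈ ℝ with |x| > t. Then the function ε ↦ ∫_ℝ exp(-(ε·t + i·t)·√(p² + m²))·exp(i·p·x) dp (each integral being absolutely convergent for ε > 0) tends, as ε → 0⁺, to 2·i·t·m·K₁(m·√(x² - t²)) / √(x² - t²). -/
/-!
The substitution `p = m sinh u` turns the Green function at complex time `τ`, `Re τ > 0`, into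
`m ∫ exp (-m τ cosh u + i m x sinh u) cosh u du`. For `|Im τ| < x` the integrand is entire in the
rapidity `u` and decays like `exp (-c cosh (Re u))` on the strip `0 ≤ Im u ≤ π / 2`, so the contour
may be moved to `Im u = π / 2`. There the decay no longer depends on `Re τ > 0`: the integral is
continuous up to `τ = i t`, where a real translation of `u`, i.e. a Lorentz boost, turns it into the
integral representation of `K₁`.
-/

open MeasureTheory Real Set Complex Filter

open scoped Topology

lemma abs_sinh_lt_cosh (u : ℝ) : |Real.sinh u| < Real.cosh u := by
  rw [Real.abs_sinh, ← Real.cosh_abs]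
  exact Real.sinh_lt_cosh _

lemma norm_cosh_le_cosh_re (z : ℂ) : ‖Complex.cosh z‖ ≤ Real.cosh z.re := by
  rw [Complex.cosh, Real.cosh_eq, norm_div, Complex.norm_ofNat]
  gcongr
  simpa [Complex.norm_exp] using norm_add_le (Complex.exp z) (Complex.exp (-z))

lemma tendsto_cosh_cocompact : Tendsto Real.cosh (cocompact ℝ) atTop := by
  refine tendsto_atTop_mono (fun u => ?_) (tendsto_norm_cocompact_atTop (E := ℝ))
  calc |u| ≤ Real.sinh |u| := Real.self_le_sinh_iff.mpr (abs_nonneg u)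
    _ ≤ Real.cosh |u| := (Real.sinh_lt_cosh _).le
    _ = Real.cosh u := Real.cosh_abs u

lemma tendsto_cosh_mul_exp_neg_mul_cosh {c : ℝ} (hc : 0 < c) :
    Tendsto (fun u => Real.cosh u * Real.exp (-c * Real.cosh u)) (cocompact ℝ) (𝓝 0) := by
  simpa only [Real.rpow_one, Function.comp_def] using
    (tendsto_rpow_mul_exp_neg_mul_atTop_nhds_zero 1 c hc).comp tendsto_cosh_cocompact

lemma min_le_mul_cos_add_mul_sin {a b θ : ℝ} (ha : 0 ≤ a) (hb : 0 ≤ b)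
    (hθ : θ ∈ Icc 0 (π / 2)) : min a b ≤ a * Real.cos θ + b * Real.sin θ := by
  have hcos : 0 ≤ Real.cos θ := Real.cos_nonneg_of_mem_Icc ⟨by linarith [hθ.1, pi_pos], hθ.2⟩
  have hsin : 0 ≤ Real.sin θ := Real.sin_nonneg_of_mem_Icc ⟨hθ.1, by linarith [hθ.2, pi_pos]⟩
  have one_le : 1 ≤ Real.cos θ + Real.sin θ := by
    nlinarith [Real.sin_sq_add_cos_sq θ, Real.cos_le_one θ, Real.sin_le_one θ]
  calc min a b ≤ min a b * (Real.cos θ + Real.sin θ) := le_mul_of_one_le_right (le_min ha hb) one_le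
    _ = min a b * Real.cos θ + min a b * Real.sin θ := mul_add _ _ _
    _ ≤ a * Real.cos θ + b * Real.sin θ := by gcongr <;> simp

section SinhSubstitution

variable {E : Type*} [NormedAddCommGroup E] [NormedSpace ℝ E]

lemma integrable_cosh_smul_comp_sinh_iff {f : ℝ → E} :
    Integrable (fun u => Real.cosh u • f (Real.sinh u)) ↔ Integrable f := by
  have h := integrableOn_image_iff_integrableOn_deriv_smul_of_monotoneOn MeasurableSet.univ
    (fun u _ => (Real.hasDerivAt_sinh u).hasDerivWithinAt)
    (Real.sinh_strictMono.monotone.monotoneOn univ) f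
  simpa only [image_univ, Real.sinh_surjective.range_eq, integrableOn_univ] using h.symm

lemma integral_cosh_smul_comp_sinh (f : ℝ → E) :
    ∫ u, Real.cosh u • f (Real.sinh u) = ∫ p, f p := by
  have h := integral_image_eq_integral_deriv_smul_of_monotoneOn MeasurableSet.univ
    (fun u _ => (Real.hasDerivAt_sinh u).hasDerivWithinAt)
    (Real.sinh_strictMono.monotone.monotoneOn univ) f
  simpa only [image_univ, Real.sinh_surjective.range_eq, setIntegral_univ] using h.symm

lemma integrable_exp_neg_mul_abs {c : ℝ} (hc : 0 < c) :
    Integrable fun p : ℝ => Real.exp (-c * |p|) := by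
  refine (integrable_fun_norm_addHaar volume (f := fun r : ℝ => Real.exp (-c * r))).mpr ?_
  simpa using exp_neg_integrableOn_Ioi 0 hc

lemma integrable_cosh_mul_exp_neg_mul_cosh {c : ℝ} (hc : 0 < c) :
    Integrable fun u => Real.cosh u * Real.exp (-c * Real.cosh u) := by
  refine (integrable_cosh_smul_comp_sinh_iff.mpr (integrable_exp_neg_mul_abs hc)).mono'
    (by fun_prop) (.of_forall fun u => ?_)
  rw [Real.norm_of_nonneg (by positivity), smul_eq_mul, neg_mul, neg_mul]
  gcongr
  exact (abs_sinh_lt_cosh u).le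

end SinhSubstitution

lemma tendsto_intervalIntegral_zero_of_norm_le {ι E : Type*} [NormedAddCommGroup E]
    [NormedSpace ℝ E] {F : ι → ℝ → E} {a b : ℝ} {g : ι → ℝ} {l : Filter ι}
    (hFg : ∀ i, ∀ y ∈ uIoc a b, ‖F i y‖ ≤ g i) (hg : Tendsto g l (𝓝 0)) :
    Tendsto (fun i => ∫ y in a..b, F i y) l (𝓝 0) := by
  have hgab : Tendsto (fun i => g i * |b - a|) l (𝓝 0) := by simpa using hg.mul_const |b - a|
  exact squeeze_zero_norm (fun i => intervalIntegral.norm_integral_le_of_norm_le_const (hFg i)) hgab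

theorem integral_add_mul_I_eq_integral {E : Type*} [NormedAddCommGroup E] [NormedSpace ℂ E]
    [CompleteSpace E] {f : ℂ → E} {b : ℝ} {g : ℝ → ℝ}
    (hf : DifferentiableOn ℂ f (univ ×ℂ uIcc 0 b)) (hf₀ : Integrable fun u : ℝ => f u)
    (hfb : Integrable fun u : ℝ => f (u + b * I))
    (hfg : ∀ u : ℝ, ∀ y ∈ uIcc 0 b, ‖f (u + y * I)‖ ≤ g u)
    (hg : Tendsto g (cocompact ℝ) (𝓝 0)) :
    ∫ u : ℝ, f (u + b * I) = ∫ u : ℝ, f u := by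
  have hside : Tendsto (fun u : ℝ => ∫ y in (0 : ℝ)..b, f (u + y * I)) (cocompact ℝ) (𝓝 0) :=
    tendsto_intervalIntegral_zero_of_norm_le (fun u y hy => hfg u y (uIoc_subset_uIcc hy)) hg
  have hright := (hside.mono_left atTop_le_cocompact).const_smul I
  have hleft := ((hside.mono_left atBot_le_cocompact).comp tendsto_neg_atTop_atBot).const_smul I
  have hbottom := intervalIntegral_tendsto_integral hf₀ tendsto_neg_atTop_atBot tendsto_id
  have htop := intervalIntegral_tendsto_integral hfb tendsto_neg_atTop_atBot tendsto_id
  have cauchy (T : ℝ) : (∫ u in -T..T, f u) - (∫ u in -T..T, f (u + b * I)) +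
      I • (∫ y in (0 : ℝ)..b, f (T + y * I)) - I • ∫ y in (0 : ℝ)..b, f ((-T : ℝ) + y * I) = 0 := by
    simpa using Complex.integral_boundary_rect_eq_zero_of_differentiableOn f (-T : ℝ) (T + b * I)
      (hf.mono <| by simpa using reProdIm_subset_iff.mpr (prod_mono_left (subset_univ _)))
  have hzero := tendsto_nhds_unique (((hbottom.sub htop).add hright).sub hleft)
    (tendsto_const_nhds.congr fun T => (cauchy T).symm)
  simp only [smul_zero, add_zero, sub_zero] at hzero
  exact (sub_eq_zero.mp hzero).symm

lemma integral_exp_neg_mul_cosh_mul_cosh (ν z : ℝ) :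
    ∫ u, Real.exp (-z * Real.cosh u) * Real.cosh (ν * u) = 2 * besselK ν z := by
  rw [besselK, ← integral_comp_abs]
  congr with u
  rw [Real.cosh_abs, ← Real.cosh_abs (ν * |u|), abs_mul, abs_abs, ← abs_mul, Real.cosh_abs]

lemma integral_exp_neg_mul_cosh_mul_sinh (z : ℝ) :
    ∫ u, Real.exp (-z * Real.cosh u) * Real.sinh u = 0 := by
  have h := integral_neg_eq_self (fun u => Real.exp (-z * Real.cosh u) * Real.sinh u) volume
  simp only [Real.sinh_neg, Real.cosh_neg, mul_neg, integral_neg] at h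
  linarith

lemma integral_exp_neg_mul_cosh_sub_mul_sinh {z : ℝ} (hz : 0 < z) (a : ℝ) :
    ∫ u, Real.exp (-z * Real.cosh (u - a)) * Real.sinh u = 2 * Real.sinh a * besselK 1 z := by
  have hcosh : Integrable fun u => Real.exp (-z * Real.cosh u) * Real.cosh u := by
    simpa only [mul_comm] using integrable_cosh_mul_exp_neg_mul_cosh hz
  have hsinh : Integrable fun u => Real.exp (-z * Real.cosh u) * Real.sinh u := by
    refine hcosh.mono (by fun_prop) (.of_forall fun u => ?_)
    rw [norm_mul, norm_mul, Real.norm_of_nonneg (Real.cosh_pos u).le]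
    gcongr
    exact (abs_sinh_lt_cosh u).le
  have hK := integral_exp_neg_mul_cosh_mul_cosh 1 z
  simp only [one_mul] at hK
  calc ∫ u, Real.exp (-z * Real.cosh (u - a)) * Real.sinh u
      = ∫ u, Real.exp (-z * Real.cosh u) * Real.sinh (u + a) := by
        rw [← integral_add_right_eq_self _ a]
        simp only [add_sub_cancel_right]
    _ = ∫ u, (Real.cosh a * (Real.exp (-z * Real.cosh u) * Real.sinh u) +
          Real.sinh a * (Real.exp (-z * Real.cosh u) * Real.cosh u)) := by
        congr with u
        rw [Real.sinh_add]
        ring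
    _ = 2 * Real.sinh a * besselK 1 z := by
        rw [integral_add (hsinh.const_mul _) (hcosh.const_mul _), integral_const_mul,
          integral_const_mul, integral_exp_neg_mul_cosh_mul_sinh, hK]
        ring

lemma exists_eq_sqrt_mul_cosh_and_eq_sqrt_mul_sinh {A B : ℝ} (h : |B| < A) :
    ∃ a, A = √(A ^ 2 - B ^ 2) * Real.cosh a ∧ B = √(A ^ 2 - B ^ 2) * Real.sinh a := by
  have hpos : 0 < A ^ 2 - B ^ 2 := sub_pos.mpr (sq_lt_sq' (abs_lt.mp h).1 (abs_lt.mp h).2)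
  set s := √(A ^ 2 - B ^ 2)
  have hs : 0 < s := Real.sqrt_pos.mpr hpos
  have hA : 0 < A := (abs_nonneg B).trans_lt h
  refine ⟨Real.arsinh (B / s), ?_, by rw [Real.sinh_arsinh, mul_div_cancel₀ _ hs.ne']⟩
  rw [← sq_eq_sq₀ hA.le (by positivity), mul_pow, Real.cosh_sq, Real.sinh_arsinh, div_pow,
    mul_add, mul_div_cancel₀ _ (by positivity), Real.sq_sqrt hpos.le]
  ring

theorem integral_exp_neg_sub_mul_sinh_eq_besselK {A B : ℝ} (h : |B| < A) :
    ∫ u, Real.exp (-(A * Real.cosh u - B * Real.sinh u)) * Real.sinh u =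
      2 * B * (besselK 1 √(A ^ 2 - B ^ 2) / √(A ^ 2 - B ^ 2)) := by
  obtain ⟨a, hA, hB⟩ := exists_eq_sqrt_mul_cosh_and_eq_sqrt_mul_sinh h
  have hs : 0 < √(A ^ 2 - B ^ 2) :=
    Real.sqrt_pos.mpr (sub_pos.mpr (sq_lt_sq' (abs_lt.mp h).1 (abs_lt.mp h).2))
  set s := √(A ^ 2 - B ^ 2)
  have boost (u : ℝ) : -(A * Real.cosh u - B * Real.sinh u) = -s * Real.cosh (u - a) := by
    rw [hA, hB, Real.cosh_sub]
    ring
  simp only [boost, integral_exp_neg_mul_cosh_sub_mul_sinh hs]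
  rw [hB]
  field_simp

/-- The integrand of the Green function in the complex rapidity `w`, where `p = m sinh w`, with
`α = m τ` for the complex time `τ` and `β = m x`. -/
noncomputable def rapidityIntegrand (α : ℂ) (β : ℝ) (w : ℂ) : ℂ :=
  Complex.exp (-α * Complex.cosh w + I * β * Complex.sinh w) * Complex.cosh w

namespace rapidityIntegrand

variable {α : ℂ} {β θ : ℝ}

lemma differentiable (α : ℂ) (β : ℝ) : Differentiable ℂ (rapidityIntegrand α β) := by
  unfold rapidityIntegrand
  fun_prop

lemma norm_le (α : ℂ) (β : ℝ) (hθ : 0 ≤ Real.sin θ) (u : ℝ) :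
    ‖rapidityIntegrand α β (u + θ * I)‖ ≤ Real.cosh u *
      Real.exp (-(α.re * Real.cos θ + (β - |α.im|) * Real.sin θ) * Real.cosh u) := by
  have hre : (-α * Complex.cosh (u + θ * I) + I * β * Complex.sinh (u + θ * I)).re =
      -(α.re * Real.cosh u * Real.cos θ +
        (β * Real.cosh u - α.im * Real.sinh u) * Real.sin θ) := by
    rw [Complex.cosh_add, Complex.sinh_add, Complex.cosh_mul_I, Complex.sinh_mul_I]
    simp only [← ofReal_cosh, ← ofReal_sinh, ← ofReal_cos, ← ofReal_sin, add_re, neg_re, mul_re,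
      mul_im, add_im, neg_im, ofReal_re, ofReal_im, I_re, I_im]
    ring
  have him : α.im * Real.sinh u ≤ |α.im| * Real.cosh u :=
    calc α.im * Real.sinh u ≤ |α.im| * |Real.sinh u| := abs_mul α.im _ ▸ le_abs_self _
      _ ≤ |α.im| * Real.cosh u := by gcongr; exact (abs_sinh_lt_cosh u).le
  rw [rapidityIntegrand, norm_mul, Complex.norm_exp, hre, mul_comm]
  gcongr
  · simpa using norm_cosh_le_cosh_re (u + θ * I)
  · linarith [mul_le_mul_of_nonneg_right him hθ]

lemma norm_le_of_mem_Icc (hα : 0 ≤ α.re) (hβ : |α.im| ≤ β) (hθ : θ ∈ Icc 0 (π / 2)) (u : ℝ) :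
    ‖rapidityIntegrand α β (u + θ * I)‖ ≤
      Real.cosh u * Real.exp (-min α.re (β - |α.im|) * Real.cosh u) := by
  refine (norm_le α β (Real.sin_nonneg_of_mem_Icc ⟨hθ.1, by linarith [hθ.2, pi_pos]⟩) u).trans ?_
  gcongr
  exact min_le_mul_cos_add_mul_sin hα (sub_nonneg.mpr hβ) hθ

lemma integrable (hα : 0 < α.re) (hβ : |α.im| < β) (hθ : θ ∈ Icc 0 (π / 2)) :
    Integrable fun u : ℝ => rapidityIntegrand α β (u + θ * I) :=
  (integrable_cosh_mul_exp_neg_mul_cosh (lt_min hα (sub_pos.mpr hβ))).mono'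
    ((differentiable α β).continuous.comp (by fun_prop)).aestronglyMeasurable
    (.of_forall (norm_le_of_mem_Icc hα.le hβ.le hθ))

theorem integral_add_pi_div_two_mul_I (hα : 0 < α.re) (hβ : |α.im| < β) :
    ∫ u : ℝ, rapidityIntegrand α β (u + (π / 2 : ℝ) * I) = ∫ u : ℝ, rapidityIntegrand α β u := by
  have hpi : (0 : ℝ) ≤ π / 2 := by positivity
  refine integral_add_mul_I_eq_integral (differentiable α β).differentiableOn ?_
    (integrable hα hβ ⟨hpi, le_rfl⟩) (fun u y hy => ?_)
    (tendsto_cosh_mul_exp_neg_mul_cosh (lt_min hα (sub_pos.mpr hβ)))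
  · simpa using integrable hα hβ ⟨le_rfl, hpi⟩
  · exact norm_le_of_mem_Icc hα.le hβ.le (uIcc_of_le hpi ▸ hy) u

theorem continuousAt_integral_add_pi_div_two_mul_I (hβ : |α.im| < β) :
    ContinuousAt (fun α' => ∫ u : ℝ, rapidityIntegrand α' β (u + (π / 2 : ℝ) * I)) α := by
  obtain ⟨b, hαb, hbβ⟩ := exists_between hβ
  have hnear : ∀ᶠ α' : ℂ in 𝓝 α, |α'.im| < b :=
    (continuous_abs.comp continuous_im).continuousAt.eventually_lt_const hαb
  refine continuousAt_of_dominated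
    (bound := fun u => Real.cosh u * Real.exp (-(β - b) * Real.cosh u))
    (.of_forall fun α' => ?_) (hnear.mono fun α' hα' => .of_forall fun u => ?_)
    (integrable_cosh_mul_exp_neg_mul_cosh (sub_pos.mpr hbβ)) (.of_forall fun u => ?_)
  · exact ((differentiable α' β).continuous.comp (by fun_prop)).aestronglyMeasurable
  · refine (norm_le α' β (by simp) u).trans ?_
    rw [Real.cos_pi_div_two, Real.sin_pi_div_two, mul_zero, zero_add, mul_one]
    gcongr
  · unfold rapidityIntegrand
    fun_prop

lemma apply_add_pi_div_two_mul_I (A B u : ℝ) :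
    rapidityIntegrand (I * B) A (u + (π / 2 : ℝ) * I) =
      I * (Real.exp (-(A * Real.cosh u - B * Real.sinh u)) * Real.sinh u : ℝ) := by
  have hcosh : Complex.cosh (u + (π / 2 : ℝ) * I) = I * Complex.sinh u := by
    simp [Complex.cosh_add, Complex.cosh_mul_I, Complex.sinh_mul_I, mul_comm I]
  have hsinh : Complex.sinh (u + (π / 2 : ℝ) * I) = I * Complex.cosh u := by
    simp [Complex.sinh_add, Complex.cosh_mul_I, Complex.sinh_mul_I, mul_comm I]
  have hexp : -(I * B) * (I * Complex.sinh u) + I * A * (I * Complex.cosh u) =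
      -(A * Complex.cosh u - B * Complex.sinh u) := by
    linear_combination (A * Complex.cosh u - B * Complex.sinh u) * I_mul_I
  rw [rapidityIntegrand, hcosh, hsinh, hexp]
  push_cast
  ring

theorem integral_add_pi_div_two_mul_I_eq_besselK {A B : ℝ} (h : |B| < A) :
    ∫ u : ℝ, rapidityIntegrand (I * B) A (u + (π / 2 : ℝ) * I) =
      2 * I * B * (besselK 1 √(A ^ 2 - B ^ 2) / √(A ^ 2 - B ^ 2) : ℝ) := by
  simp only [apply_add_pi_div_two_mul_I]
  rw [integral_const_mul, integral_complex_ofReal, integral_exp_neg_sub_mul_sinh_eq_besselK h]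
  push_cast
  ring

end rapidityIntegrand

/-- The Green function of the square-root operator `√(p² + m²)` in `1 + 1` dimensions at complex
time `τ`: physical time is `τ = i t`, and the regularization
replaces it by `τ = ε t + i t`. -/
noncomputable def complexTimeGreen (m : ℝ) (τ : ℂ) (x : ℝ) : ℂ :=
  ∫ p : ℝ, Complex.exp (-τ * √(p ^ 2 + m ^ 2)) * Complex.exp (I * p * x)

namespace complexTimeGreen

lemma integrable_integrand (m x : ℝ) {τ : ℂ} (hτ : 0 < τ.re) :
    Integrable fun p : ℝ => Complex.exp (-τ * √(p ^ 2 + m ^ 2)) * Complex.exp (I * p * x) := by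
  refine (integrable_exp_neg_mul_abs hτ).mono' (by fun_prop) (.of_forall fun p => ?_)
  have hp : |p| ≤ √(p ^ 2 + m ^ 2) := Real.abs_le_sqrt (by linarith [sq_nonneg m])
  simpa [Complex.norm_exp] using mul_le_mul_of_nonneg_left hp hτ.le

lemma abs_right (m : ℝ) (τ : ℂ) (x : ℝ) : complexTimeGreen m τ |x| = complexTimeGreen m τ x := by
  rcases abs_choice x with hx | hx
  · rw [hx]
  · rw [hx, complexTimeGreen, complexTimeGreen, ← integral_neg_eq_self]
    simp

lemma eq_integral_rapidityIntegrand {m : ℝ} (hm : 0 < m) (τ : ℂ) (x : ℝ) :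
    complexTimeGreen m τ x = m * ∫ u : ℝ, rapidityIntegrand (m * τ) (m * x) u := by
  set f : ℝ → ℂ := fun p => Complex.exp (-τ * √(p ^ 2 + m ^ 2)) * Complex.exp (I * p * x)
  have energy (u : ℝ) : √((m * Real.sinh u) ^ 2 + m ^ 2) = m * Real.cosh u := by
    rw [show (m * Real.sinh u) ^ 2 + m ^ 2 = (m * Real.cosh u) ^ 2 by
      linear_combination -m ^ 2 * Real.cosh_sq u, Real.sqrt_sq (by positivity)]
  calc complexTimeGreen m τ x
      = m * ∫ q, f (m * q) := by
        rw [Measure.integral_comp_mul_left, abs_of_pos (inv_pos.mpr hm), real_smul, ofReal_inv,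
          mul_inv_cancel_left₀ (ofReal_ne_zero.mpr hm.ne')]
        rfl
    _ = m * ∫ u, Real.cosh u • f (m * Real.sinh u) := by rw [← integral_cosh_smul_comp_sinh]
    _ = m * ∫ u : ℝ, rapidityIntegrand (m * τ) (m * x) u := by
        congr with u
        simp only [f, energy, rapidityIntegrand, ← Complex.exp_add, real_smul]
        rw [mul_comm]
        push_cast
        ring_nf

lemma eq_integral_rapidityIntegrand_add_pi_div_two_mul_I {m x : ℝ} {τ : ℂ} (hm : 0 < m)
    (hτ : 0 < τ.re) (hx : |τ.im| < x) :
    complexTimeGreen m τ x =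
      m * ∫ u : ℝ, rapidityIntegrand (m * τ) (m * x) (u + (π / 2 : ℝ) * I) := by
  rw [eq_integral_rapidityIntegrand hm, rapidityIntegrand.integral_add_pi_div_two_mul_I]
  · simpa using mul_pos hm hτ
  · simpa [abs_mul, abs_of_pos hm] using mul_lt_mul_of_pos_left hx hm

theorem tendsto_of_abs_lt {m t x : ℝ} (hm : 0 < m) (hx : |t| < x) :
    Tendsto (fun τ => complexTimeGreen m τ x) (𝓝[{τ | 0 < τ.re}] (I * t))
      (𝓝 (2 * I * t * m * (besselK 1 (m * √(x ^ 2 - t ^ 2)) / √(x ^ 2 - t ^ 2) : ℝ))) := by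
  set F : ℂ → ℂ := fun τ =>
    m * ∫ u : ℝ, rapidityIntegrand (m * τ) (m * x) (u + (π / 2 : ℝ) * I)
  have hmx : |m * t| < m * x := by
    simpa [abs_mul, abs_of_pos hm] using mul_lt_mul_of_pos_left hx hm
  have hF : ContinuousAt F (I * t) :=
    continuousAt_const.mul <| ContinuousAt.comp
      (g := fun α => ∫ u : ℝ, rapidityIntegrand α (m * x) (u + (π / 2 : ℝ) * I))
      (rapidityIntegrand.continuousAt_integral_add_pi_div_two_mul_I (by simpa using hmx))
      (continuousAt_const.mul continuousAt_id)
  have hsqrt : √((m * x) ^ 2 - (m * t) ^ 2) = m * √(x ^ 2 - t ^ 2) := by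
    rw [mul_pow, mul_pow, ← mul_sub, Real.sqrt_mul (sq_nonneg m), Real.sqrt_sq hm.le]
  have hFt : F (I * t) =
      2 * I * t * m * (besselK 1 (m * √(x ^ 2 - t ^ 2)) / √(x ^ 2 - t ^ 2) : ℝ) := by
    have hm' : (m : ℂ) ≠ 0 := ofReal_ne_zero.mpr hm.ne'
    simp only [F]
    rw [mul_left_comm, ← ofReal_mul, rapidityIntegrand.integral_add_pi_div_two_mul_I_eq_besselK hmx,
      hsqrt]
    push_cast
    field_simp
  have hnear : ∀ᶠ τ : ℂ in 𝓝 (I * t), |τ.im| < x :=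
    (continuous_abs.comp continuous_im).continuousAt.eventually_lt_const (by simpa using hx)
  refine hFt ▸ (hF.mono_left nhdsWithin_le_nhds).congr' ?_
  filter_upwards [self_mem_nhdsWithin, nhdsWithin_le_nhds hnear] with τ hτ hτx
  exact (eq_integral_rapidityIntegrand_add_pi_div_two_mul_I hm hτ hτx).symm

end complexTimeGreen

lemma tendsto_regularized_time {t : ℝ} (ht : 0 < t) :
    Tendsto (fun ε : ℝ => ((ε * t : ℝ) : ℂ) + I * t) (𝓝[>] 0) (𝓝[{τ | 0 < τ.re}] (I * t)) := by
  refine tendsto_nhdsWithin_iff.mpr ⟨?_, eventually_mem_nhdsWithin.mono fun ε hε => ?_⟩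
  · refine Tendsto.mono_left (Continuous.tendsto' (by fun_prop) _ _ ?_) nhdsWithin_le_nhds
    simp
  · simpa using mul_pos hε ht

theorem tendsto_regularized_green_one_dim_general (m t x : ℝ) (hm : 0 < m) (hx : |t| < |x|) :
    (∀ τ : ℂ, 0 < τ.re → Integrable fun p : ℝ =>
        Complex.exp (-τ * √(p ^ 2 + m ^ 2)) * Complex.exp (I * p * x)) ∧
    Tendsto (fun τ : ℂ => ∫ p : ℝ, Complex.exp (-τ * √(p ^ 2 + m ^ 2)) * Complex.exp (I * p * x))
      (𝓝[{τ | 0 < τ.re}] (I * t))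
      (𝓝 (2 * I * t * m * (besselK 1 (m * √(x ^ 2 - t ^ 2)) / √(x ^ 2 - t ^ 2) : ℝ))) := by
  have hlim := complexTimeGreen.tendsto_of_abs_lt hm hx
  simp only [complexTimeGreen.abs_right, sq_abs] at hlim
  exact ⟨fun τ => complexTimeGreen.integrable_integrand m x, hlim⟩

/-- Equation (19) of the paper: the `ε → 0⁺` limit of the regularized (1+1)-dimensional
Green function of the square-root operator at spacelike separation `|x| > t > 0`:
`∫_ℝ exp(-(εt + it)√(p² + m²)) exp(i p x) dp → 2 i t m K₁(m √(x² - t²)) / √(x² - t²)`. -/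
theorem tendsto_regularized_green_one_dim (m t x : ℝ) (hm : 0 < m) (ht : 0 < t)
    (hx : t < |x|) :
    (∀ ε : ℝ, 0 < ε → Integrable (fun p : ℝ =>
        Complex.exp (-((ε * t : ℝ) + Complex.I * t) * Real.sqrt (p ^ 2 + m ^ 2)) *
          Complex.exp (Complex.I * p * x)) volume) ∧
    Tendsto (fun ε : ℝ =>
        ∫ p : ℝ, Complex.exp (-((ε * t : ℝ) + Complex.I * t) * Real.sqrt (p ^ 2 + m ^ 2)) *
          Complex.exp (Complex.I * p * x))
      (nhdsWithin 0 (Set.Ioi 0))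
      (nhds (2 * Complex.I * t * m *
        (besselK 1 (m * Real.sqrt (x ^ 2 - t ^ 2)) / Real.sqrt (x ^ 2 - t ^ 2) : ℝ))) := by
  obtain ⟨integrable, tendsto⟩ :=
    tendsto_regularized_green_one_dim_general m t x hm (by rwa [abs_of_pos ht])
  exact ⟨fun ε hε => integrable _ (by simpa using mul_pos hε ht),
    tendsto.comp (tendsto_regularized_time ht)⟩
end
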